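/- Let w be a weight function on [-1,1], let (π_k)_{k≤m} be orthonormal polynomials for w satisfying the three-term recurrence with Jacobi matrices J_m, and let (λ_i, ν_i)_{i<m} be an m-point Gauss quadrature rule for w whose nodes are zeros of π_m. Suppose every entry A_{kl} of A is a polynomial of degree at most m_a and every entry b_k of b is a polynomial of degree at most m_b, and m ≥ max(⌈(m_a + 2n − 1)/2⌉, ⌈(m_b + n)/2⌉). If the N×n matrix X_g solves the n-term Galerkin system for A, b, and w, then for all k < N and i < n: Σ_{l<N} Σ_{j<n} (A_{kl}(J_m))_{ij} · X_g(l,j) = (b_k(J_m))_{i,0}, where p(J_m) denotes evaluation of the polynomial p at the m×m matrix J_m, and indices i,j < n refer to the leading n×n principal submatrix of p(J_m). In block form, [A]_n(J_m) vec(X_gᵀ) = [b]_n(J_m) e_0. -/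

import Mathlib

open MeasureTheory Polynomial Matrix

/-- The `m × m` symmetric tridiagonal Jacobi matrix with diagonal entries
`α 0, …, α (m-1)` and off-diagonal entries `β 1, …, β (m-1)`. -/
def jacobiMatrix (α β : ℕ → ℝ) (m : ℕ) : Matrix (Fin m) (Fin m) ℝ :=
  Matrix.of fun i j =>
    if (i : ℕ) = (j : ℕ) then α (i : ℕ)
    else if (i : ℕ) + 1 = (j : ℕ) ∨ (j : ℕ) + 1 = (i : ℕ) then β (max (i : ℕ) (j : ℕ))
    else 0

lemma aeval_mulVec_eigen {m : ℕ} (J : Matrix (Fin m) (Fin m) ℝ) (v : Fin m → ℝ) (c : ℝ)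
    (h : J *ᵥ v = c • v) (p : Polynomial ℝ) :
    (Polynomial.aeval J p) *ᵥ v = p.eval c • v := by
  induction p using Polynomial.induction_on with
  | C a => simp [Algebra.algebraMap_eq_smul_one, Matrix.smul_mulVec]
  | add p q hp hq => simp only [map_add, Matrix.add_mulVec, hp, hq, eval_add, add_smul]
  | monomial k a ih =>
    rw [pow_succ, ← mul_assoc, map_mul, aeval_X, ← Matrix.mulVec_mulVec, h, Matrix.mulVec_smul,
      ih, smul_smul, eval_mul_X, mul_comm]

lemma jacobi_mulVec (m : ℕ) (π : ℕ → Polynomial ℝ) (α β : ℕ → ℝ)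
    (hrec : ∀ (k : ℕ) (s : ℝ), β (k + 1) * (π (k + 1)).eval s
      = (s - α k) * (π k).eval s - β k * (if k = 0 then 0 else (π (k - 1)).eval s))
    (c : ℝ) (hc : (π m).eval c = 0) :
    jacobiMatrix α β m *ᵥ (fun i => (π (i : ℕ)).eval c)
      = c • (fun i : Fin m => (π (i : ℕ)).eval c) := by
  ext i
  obtain ⟨i, hi⟩ := i
  have key : ∀ j : ℕ, (if i = j then α i
      else if i + 1 = j ∨ j + 1 = i then β (max i j) else 0) * (π j).eval c
      = (if i = j then α j * (π j).eval c else 0)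
        + (if i + 1 = j then β j * (π j).eval c else 0)
        + (if i - 1 = j then (if i = 0 then 0 else β i * (π j).eval c) else 0) := by
    intro j
    rcases lt_trichotomy i j with h | h | h
    · have h1 : i ≠ j := h.ne
      have h2 : ¬ (j + 1 = i) := by omega
      have h3 : ¬ (i - 1 = j) := by omega
      simp [h1, h2, h3, max_eq_right h.le]
    · subst h
      by_cases h0 : i = 0
      · simp [h0]
      · have : ¬ (i - 1 = i) := by omega
        simp [this]
    · have h1 : i ≠ j := h.ne'
      have h2 : ¬ (i + 1 = j) := by omega
      have h4 : i ≠ 0 := by omega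
      have h3 : i - 1 = j ↔ j + 1 = i := by omega
      simp [h1, h2, h3, h4, max_eq_left h.le]
  have e : (jacobiMatrix α β m *ᵥ (fun i => (π (i : ℕ)).eval c)) ⟨i, hi⟩
      = ∑ j ∈ Finset.range m, (if i = j then α i
      else if i + 1 = j ∨ j + 1 = i then β (max i j) else 0) * (π j).eval c := by
    rw [← Fin.sum_univ_eq_sum_range]
    rfl
  rw [e, Finset.sum_congr rfl (fun j _ => key j), Finset.sum_add_distrib, Finset.sum_add_distrib,
    Finset.sum_ite_eq, Finset.sum_ite_eq, Finset.sum_ite_eq]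
  have h1 : i - 1 < m := by omega
  have h2 : (if i + 1 ∈ Finset.range m then β (i + 1) * (π (i + 1)).eval c else 0)
      = β (i + 1) * (π (i + 1)).eval c := by
    split_ifs with h
    · rfl
    · have : i + 1 = m := by
        rw [Finset.mem_range] at h
        omega
      rw [this, hc, mul_zero]
  rw [h2, hrec i c]
  simp only [Finset.mem_range, hi, h1, if_true, Pi.smul_apply, smul_eq_mul]
  split_ifs <;> ring

lemma aeval_jacobi_apply (m : ℕ) (w : ℝ → ℝ) (π : ℕ → Polynomial ℝ)
    (hπdeg : ∀ k, (π k).degree = (k : ℕ))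
    (hπorth : ∀ j k : ℕ, (∫ s in (-1 : ℝ)..1, (π j).eval s * (π k).eval s * w s)
      = if j = k then (1 : ℝ) else 0)
    (α β : ℕ → ℝ)
    (hrec : ∀ (k : ℕ) (s : ℝ), β (k + 1) * (π (k + 1)).eval s
      = (s - α k) * (π k).eval s - β k * (if k = 0 then 0 else (π (k - 1)).eval s))
    (lam ν : Fin m → ℝ)
    (hexact : ∀ p : Polynomial ℝ, p.degree < (2 * m : ℕ) →
      (∫ s in (-1 : ℝ)..1, p.eval s * w s) = ∑ i, ν i * p.eval (lam i))
    (hzeros : ∀ i, (π m).eval (lam i) = 0) (p : Polynomial ℝ) (i j : Fin m)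
    (d : ℕ) (hp : p.degree ≤ (d : WithBot ℕ)) (hd : (i : ℕ) + j + d < 2 * m) :
    (Polynomial.aeval (jacobiMatrix α β m) p) i j
      = ∫ s in (-1 : ℝ)..1, (π i).eval s * (π j).eval s * p.eval s * w s := by
  have horth : ∀ a b : Fin m, (∑ t, ν t * ((π a).eval (lam t) * (π b).eval (lam t)))
      = if a = b then (1 : ℝ) else 0 := by
    intro a b
    have h := hexact (π a * π b) (by
      rw [degree_mul, hπdeg, hπdeg]
      have := a.2
      have := b.2
      exact_mod_cast (by omega : (a : ℕ) + b < 2 * m))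
    simp only [eval_mul] at h
    rw [← h, hπorth]
    simp [Fin.ext_iff]
  have h := hexact (π i * π j * p) (by 
    rw [degree_mul, degree_mul, hπdeg, hπdeg]
    refine lt_of_le_of_lt (add_le_add_right hp _) ?_
    have h3 : (((i : ℕ) + j + d : ℕ) : WithBot ℕ) < ((2 * m : ℕ) : WithBot ℕ) :=
      WithBot.coe_lt_coe.2 hd
    exact h3)
  simp only [eval_mul] at h
  rw [h]
  have hv : ∀ t, (∑ l, (Polynomial.aeval (jacobiMatrix α β m) p) i l * (π l).eval (lam t))
      = p.eval (lam t) * (π i).eval (lam t) := fun t =>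
    congrFun (aeval_mulVec_eigen _ _ _ (jacobi_mulVec m π α β hrec (lam t) (hzeros t)) p) i
  calc _ = ∑ l, (Polynomial.aeval (jacobiMatrix α β m) p) i l * (if l = j then 1 else 0) := by simp
    _ = ∑ l, ∑ t, (Polynomial.aeval (jacobiMatrix α β m) p) i l
          * (ν t * ((π l).eval (lam t) * (π j).eval (lam t))) := by
        simp only [← horth, Finset.mul_sum]
    _ = ∑ t, ν t * (π j).eval (lam t)
          * ∑ l, (Polynomial.aeval (jacobiMatrix α β m) p) i l * (π l).eval (lam t) := by
        rw [Finset.sum_comm]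
        refine Finset.sum_congr rfl fun t _ => ?_
        rw [Finset.mul_sum]
        exact Finset.sum_congr rfl fun l _ => by ring
    _ = _ := Finset.sum_congr rfl fun t _ => by rw [hv]; ring

/-- **The Galerkin coefficients satisfy `[A]ₙ(Jₘ) vec(Xgᵀ) = [b]ₙ(Jₘ) e₀`.**
With orthonormal polynomials `π` for `w`, recurrence coefficients `α`, `β`,
and an `m`-point Gauss rule whose nodes are zeros of `π m`, where every entry of
`A` (resp. `b`) is a polynomial of degree at most `m_a` (resp. `m_b`) and
`m ≥ ⌈(m_a + 2n - 1)/2⌉`, `m ≥ ⌈(m_b + n)/2⌉`: if the `N × n` matrix `Xg` solves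
the `n`-term Galerkin system, then blockwise, using the leading `n × n` principal
submatrices of `(A k l)(Jₘ)` and `(b k)(Jₘ)`,
`∑ l ∑ j ((A k l)(Jₘ))_{i j} * Xg l j = ((b k)(Jₘ))_{i 0}`. -/
theorem galerkin_jacobi_system
    (n N m m_a m_b : ℕ) (hm0 : 0 < m) (hnm : n ≤ m) (w : ℝ → ℝ)
    (hw_pos : ∀ s ∈ Set.Icc (-1 : ℝ) 1, 0 < w s)
    (hw_norm : (∫ s in (-1 : ℝ)..1, w s) = 1)
    (π : ℕ → Polynomial ℝ)
    (hπ0 : π 0 = 1)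
    (hπdeg : ∀ k, (π k).degree = (k : ℕ))
    (hπorth : ∀ j k : ℕ, (∫ s in (-1 : ℝ)..1, (π j).eval s * (π k).eval s * w s)
      = if j = k then (1 : ℝ) else 0)
    (α β : ℕ → ℝ) (hβ : ∀ k : ℕ, 0 < β (k + 1))
    (hrec : ∀ (k : ℕ) (s : ℝ), β (k + 1) * (π (k + 1)).eval s
      = (s - α k) * (π k).eval s - β k * (if k = 0 then 0 else (π (k - 1)).eval s))
    (lam ν : Fin m → ℝ)
    (hlam_mem : ∀ i, lam i ∈ Set.Icc (-1 : ℝ) 1)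
    (hlam_inj : Function.Injective lam)
    (hν_pos : ∀ i, 0 < ν i)
    (hexact : ∀ p : Polynomial ℝ, p.degree < (2 * m : ℕ) →
      (∫ s in (-1 : ℝ)..1, p.eval s * w s) = ∑ i, ν i * p.eval (lam i))
    (hzeros : ∀ i, (π m).eval (lam i) = 0)
    (A : Fin N → Fin N → Polynomial ℝ) (b : Fin N → Polynomial ℝ)
    (hdegA : ∀ k l, (A k l).degree ≤ (m_a : ℕ))
    (hdegb : ∀ k, (b k).degree ≤ (m_b : ℕ))
    (hm1 : m_a + 2 * n - 1 ≤ 2 * m)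
    (hm2 : m_b + n ≤ 2 * m)
    (Xg : Matrix (Fin N) (Fin n) ℝ)
    (hXg : ∀ (j : Fin n) (k' : Fin N),
      (∑ k : Fin n, ∑ l : Fin N,
        (∫ s in (-1 : ℝ)..1,
          (π (j : ℕ)).eval s * (π (k : ℕ)).eval s * (A k' l).eval s * w s) * Xg l k)
      = ∫ s in (-1 : ℝ)..1, (π (j : ℕ)).eval s * (b k').eval s * w s) :
    ∀ (k : Fin N) (i : Fin n),
      (∑ l : Fin N, ∑ j : Fin n,
        (Polynomial.aeval (jacobiMatrix α β m) (A k l)) (Fin.castLE hnm i) (Fin.castLE hnm j)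
          * Xg l j)
      = (Polynomial.aeval (jacobiMatrix α β m) (b k)) (Fin.castLE hnm i) ⟨0, hm0⟩ := by
  intro k i
  have hi := i.2
  have key := aeval_jacobi_apply m w π hπdeg hπorth α β hrec lam ν hexact hzeros
  have hR : (Polynomial.aeval (jacobiMatrix α β m) (b k)) (Fin.castLE hnm i) ⟨0, hm0⟩
      = ∫ s in (-1 : ℝ)..1, (π (i : ℕ)).eval s * (b k).eval s * w s := by
    rw [key _ _ _ m_b (hdegb k) (by simp only [Fin.val_castLE]; omega)]
    simp [hπ0]
  rw [hR, ← hXg i k, Finset.sum_comm]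
  refine Finset.sum_congr rfl fun j _ => Finset.sum_congr rfl fun l _ => ?_
  have hj := j.2
  rw [key _ _ _ m_a (hdegA k l) (by simp only [Fin.val_castLE]; omega)]
  rfl
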